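/- For every n ≥ 0, the number of nonzero entries on row n of Pascal's triangle modulo 25 satisfies, as an identity in the rational numbers, a_{25}(n) = 2^{|n|_1} · 3^{|n|_2} · 4^{|n|_3} · 5^{|n|_4} · (1 + 2|n|_{10} + (3/4)|n|_{11} + (1/3)|n|_{12} + (1/8)|n|_{13} + (8/3)|n|_{20} + |n|_{21} + (4/9)|n|_{22} + (1/6)|n|_{23} + 3|n|_{30} + (9/8)|n|_{31} + (1/2)|n|_{32} + (3/16)|n|_{33} + (16/5)|n|_{40} + (6/5)|n|_{41} + (8/15)|n|_{42} + (1/5)|n|_{43}), where subword counts are taken in the base-5 representation of n. -/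

import Mathlib

/-- The number of integers `0 ≤ m ≤ n` such that `C(n,m)` is not divisible by `k`,
i.e. the number of nonzero entries on row `n` of Pascal's triangle modulo `k`. -/
def rowCount (k n : ℕ) : ℕ :=
  ((Finset.range (n + 1)).filter fun m => ¬ k ∣ n.choose m).card

/-- The number of borrows when subtracting `m` from `n` in base `b` (for `m ≤ n`):
the number of indices `i ≥ 0` with `m mod b^(i+1) > n mod b^(i+1)`. -/
def borrowCount (b n m : ℕ) : ℕ :=
  ((Finset.range (Nat.digits b n).length).filter fun i => n % b ^ (i + 1) < m % b ^ (i + 1)).card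

/-- `A_n(β)`: the number of `0 ≤ m ≤ n` with exactly `β` borrows
when subtracting `m` from `n` in base `b`. -/
def borrowA (b n β : ℕ) : ℕ :=
  ((Finset.range (n + 1)).filter fun m => borrowCount b n m = β).card

/-- `B_n(β)` with respect to `L` digit positions: the number of `n < m ≤ b^L - 1` such that
exactly `β` of the indices `0 ≤ i ≤ L - 1` satisfy `m mod b^(i+1) > n mod b^(i+1)`. -/
def borrowB (b L n β : ℕ) : ℕ :=
  ((Finset.Ioc n (b ^ L - 1)).filter fun m =>
    ((Finset.range L).filter fun i => n % b ^ (i + 1) < m % b ^ (i + 1)).card = β).card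

/-- The base-`b` digit string of `n`, most significant digit first (empty for `n = 0`). -/
def wordOf (b n : ℕ) : List ℕ := (Nat.digits b n).reverse

/-- `|n|_w`: the number of occurrences of `w` as a contiguous subword of the
base-`b` digit string of `n`. -/
def subwordCount (b n : ℕ) (w : List ℕ) : ℕ :=
  ((Finset.range ((wordOf b n).length + 1 - w.length)).filter fun s =>
    ((wordOf b n).drop s).take w.length = w).card

/-- `c(w_k ⋯ w_0)` for a word `w = [w_k, …, w_0]` (most significant letter first):
`(w_k/(w_k+1)) · (∏_{h=1}^{k−1} (b−w_{k−h})/(w_{k−h}+1)) · (b−w_0−1)/(w_0+1)`. -/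
def cword (b : ℕ) (w : List ℕ) : ℚ :=
  ((w.getD 0 0 : ℚ) / ((w.getD 0 0 : ℚ) + 1)) *
    (∏ h ∈ Finset.Ico 1 (w.length - 1),
      ((b : ℚ) - (w.getD h 0 : ℚ)) / ((w.getD h 0 : ℚ) + 1)) *
    (((b : ℚ) - (w.getD (w.length - 1) 0 : ℚ) - 1) / ((w.getD (w.length - 1) 0 : ℚ) + 1))

/-- The sum `Σ c(v)c(w)⋯c(z)` over all sets of pairwise nonoverlapping contiguous subwords
of `W` (identified by their position intervals: a pair `(s, len)` denotes the subword
occupying positions `s, …, s+len-1`) whose multiset of lengths equals `P`. -/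
def nonoverlapSum (b : ℕ) (W : List ℕ) (P : Multiset ℕ) : ℚ :=
  ∑ S ∈ ((Finset.range W.length ×ˢ Finset.Icc 1 W.length).powerset.filter fun S =>
      Multiset.map Prod.snd S.val = P ∧
      (∀ q ∈ S, q.1 + q.2 ≤ W.length) ∧
      (∀ q ∈ S, ∀ r ∈ S, q ≠ r → q.1 + q.2 ≤ r.1 ∨ r.1 + r.2 ≤ q.1)),
    ∏ q ∈ S, cword b ((W.drop q.1).take q.2)

lemma fact5 (q d : ℕ) (hd : d < 5) :
    ∃ u, Nat.Coprime 5 u ∧ (5 * q + d).factorial = 5 ^ q * q.factorial * u := by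
  have step : ∀ q d, d < 5 → (∃ u, Nat.Coprime 5 u ∧
      (5 * q).factorial = 5 ^ q * q.factorial * u) → 
      ∃ u, Nat.Coprime 5 u ∧ (5 * q + d).factorial = 5 ^ q * q.factorial * u := by
    intro q d
    induction d with
    | zero => intro _ h; exact h
    | succ d ih =>
      intro hd h
      obtain ⟨u, hu, h2⟩ := ih (by omega) h
      refine ⟨u * (5 * q + d + 1), ?_, ?_⟩
      · refine Nat.Coprime.mul_right hu ?_
        rw [Nat.Prime.coprime_iff_not_dvd (by norm_num)]
        omega
      · rw [← add_assoc, Nat.factorial_succ, h2]; ring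
  refine step q d hd ?_
  induction q with
  | zero => exact ⟨1, by simp, by simp⟩
  | succ q ih =>
    obtain ⟨u, hu, h2⟩ := step q 4 (by norm_num) ih
    refine ⟨u, hu, ?_⟩
    rw [show 5 * (q + 1) = (5 * q + 4) + 1 by ring, Nat.factorial_succ, h2, Nat.factorial_succ]
    ring

lemma choose_le (q r d e : ℕ) (hd : d < 5) (he : e ≤ d) (k : ℕ) :
    5 ^ k ∣ (5 * q + d).choose (5 * r + e) ↔ 5 ^ k ∣ q.choose r := by
  by_cases hr : r ≤ q
  · obtain ⟨s, rfl⟩ := Nat.exists_eq_add_of_le hr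
    obtain ⟨u, hu, h1⟩ := fact5 (r + s) d hd
    obtain ⟨v, hv, h2⟩ := fact5 r e (by omega)
    obtain ⟨w, hw, h3⟩ := fact5 s (d - e) (by omega)
    have h4 := Nat.choose_mul_factorial_mul_factorial
      (show 5 * r + e ≤ 5 * (r + s) + d by omega)
    rw [show 5 * (r + s) + d - (5 * r + e) = 5 * s + (d - e) by omega, h1, h2, h3] at h4
    have h5 := Nat.choose_mul_factorial_mul_factorial hr
    rw [show r + s - r = s by omega] at h5
    rw [← h5] at h4
    have h6 : (5 * (r + s) + d).choose (5 * r + e) * (v * w) = (r + s).choose r * u := by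
      have hp : 0 < 5 ^ (r + s) * (r.factorial * s.factorial) := by positivity
      apply Nat.eq_of_mul_eq_mul_left hp
      rw [pow_add] at h4 ⊢
      linarith
    rw [← (Nat.Coprime.pow_left k (hv.mul_right hw)).dvd_mul_right, h6,
      (Nat.Coprime.pow_left k hu).dvd_mul_right]
  · rw [Nat.choose_eq_zero_of_lt (by omega), Nat.choose_eq_zero_of_lt (by omega)]

lemma choose_gt (q r d e : ℕ) (he : e < 5) (hd : d < e) :
    ∃ x y, Nat.Coprime 5 x ∧ Nat.Coprime 5 y ∧
    (5 * q + d).choose (5 * r + e) * x = 5 * (q * (q - 1).choose r) * y := by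
  by_cases hr : r < q
  · obtain ⟨s, rfl⟩ := Nat.exists_eq_add_of_lt hr
    obtain ⟨u, hu, h1⟩ := fact5 (r + s + 1) d (by omega)
    obtain ⟨v, hv, h2⟩ := fact5 r e (by omega)
    obtain ⟨w, hw, h3⟩ := fact5 s (5 + d - e) (by omega)
    have h4 := Nat.choose_mul_factorial_mul_factorial
      (show 5 * r + e ≤ 5 * (r + s + 1) + d by omega)
    rw [show 5 * (r + s + 1) + d - (5 * r + e) = 5 * s + (5 + d - e) by omega, h1, h2, h3] at h4
    have h5 := Nat.choose_mul_factorial_mul_factorial (show r ≤ r + s by omega)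
    rw [show r + s - r = s by omega] at h5
    rw [Nat.factorial_succ, ← h5] at h4
    refine ⟨v * w, u, hv.mul_right hw, hu, ?_⟩
    have hp : 0 < 5 ^ (r + s) * (r.factorial * s.factorial) := by positivity
    apply Nat.eq_of_mul_eq_mul_left hp
    simp only [Nat.add_sub_cancel]
    rw [pow_add, pow_add] at h4
    rw [pow_add]
    linarith
  · refine ⟨1, 1, by simp, by simp, ?_⟩
    rw [Nat.choose_eq_zero_of_lt (by omega)]
    rcases Nat.eq_zero_or_pos q with rfl | h
    · simp
    · rw [Nat.choose_eq_zero_of_lt (by omega)]; simp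

lemma choose_gt5 (q r d e : ℕ) (he : e < 5) (hd : d < e) :
    5 ∣ (5 * q + d).choose (5 * r + e) := by
  obtain ⟨x, y, hx, hy, h⟩ := choose_gt q r d e he hd
  rw [← hx.dvd_mul_right, h, mul_assoc]
  exact Dvd.intro _ rfl

lemma choose_gt25 (q r d e : ℕ) (he : e < 5) (hd : d < e) :
    25 ∣ (5 * q + d).choose (5 * r + e) ↔ 5 ∣ q ∨ 5 ∣ (q - 1).choose r := by
  obtain ⟨x, y, hx, hy, h⟩ := choose_gt q r d e he hd
  have hx' : Nat.Coprime 25 x := Nat.Coprime.pow_left 2 hx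
  have hy' : Nat.Coprime 25 y := Nat.Coprime.pow_left 2 hy
  rw [← hx'.dvd_mul_right, h, hy'.dvd_mul_right, show 25 = 5 * 5 by norm_num,
    Nat.mul_dvd_mul_iff_left (by norm_num), Nat.Prime.dvd_mul (by norm_num)]

lemma rowCount_eq (k n N : ℕ) (h : n < N) :
    rowCount k n = ∑ m ∈ Finset.range N, if k ∣ n.choose m then 0 else 1 := by
  unfold rowCount
  rw [Finset.card_filter]
  simp only [ite_not]
  apply Finset.sum_subset
  · intro x; simp; omega
  · intro x _ hx
    simp at hx
    rw [Nat.choose_eq_zero_of_lt (by omega)]; simp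

lemma sum5 (f : ℕ → ℕ) (N : ℕ) :
    ∑ m ∈ Finset.range (5 * N), f m =
      ∑ r ∈ Finset.range N, ∑ e ∈ Finset.range 5, f (5 * r + e) := by
  induction N with
  | zero => simp
  | succ N ih => rw [mul_add, mul_one, Finset.sum_range_add, ih, Finset.sum_range_succ _ N]

lemma row5 (q d : ℕ) (hd : d < 5) : rowCount 5 (5 * q + d) = (d + 1) * rowCount 5 q := by
  rw [rowCount_eq 5 (5 * q + d) (5 * (q + 1)) (by omega), sum5,
    rowCount_eq 5 q (q + 1) (by omega), Finset.mul_sum]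
  refine Finset.sum_congr rfl fun r _ => ?_
  have h : ∀ e ∈ Finset.range 5, (if 5 ∣ (5 * q + d).choose (5 * r + e) then 0 else 1) =
      if e ≤ d then (if 5 ∣ q.choose r then 0 else 1) else 0 := by
    intro e he
    simp only [Finset.mem_range] at he
    split_ifs with h1 h2 h3 h2 h3 <;> try rfl
    · exact absurd (by simpa using (choose_le q r d e hd h2 1).1 (by simpa using h1)) h3
    · exact absurd (by simpa using (choose_le q r d e hd h2 1).2 (by simpa using h3)) h1
    · exact absurd (choose_gt5 q r d e he (by omega)) h1
  rw [Finset.sum_congr rfl h]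
  generalize (if 5 ∣ q.choose r then 0 else 1) = X
  interval_cases d <;> simp [Finset.sum_range_succ] <;> ring

lemma row25 (q d : ℕ) (hd : d < 5) : rowCount 25 (5 * q + d) =
    (d + 1) * rowCount 25 q + (4 - d) * (if 5 ∣ q then 0 else rowCount 5 (q - 1)) := by
  have hB : (if 5 ∣ q then 0 else rowCount 5 (q - 1)) =
      ∑ r ∈ Finset.range (q + 1), if 5 ∣ q ∨ 5 ∣ (q - 1).choose r then 0 else 1 := by
    by_cases h : 5 ∣ q
    · simp [h]
    · simp [h, rowCount_eq 5 (q - 1) (q + 1) (by omega)]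
  rw [hB, rowCount_eq 25 (5 * q + d) (5 * (q + 1)) (by omega), sum5,
    rowCount_eq 25 q (q + 1) (by omega), Finset.mul_sum, Finset.mul_sum,
    ← Finset.sum_add_distrib]
  refine Finset.sum_congr rfl fun r _ => ?_
  have h : ∀ e ∈ Finset.range 5, (if 25 ∣ (5 * q + d).choose (5 * r + e) then 0 else 1) =
      if e ≤ d then (if 25 ∣ q.choose r then 0 else 1) else 
        (if 5 ∣ q ∨ 5 ∣ (q - 1).choose r then 0 else 1) := by
    intro e he
    simp only [Finset.mem_range] at he
    by_cases h2 : e ≤ d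
    · have := choose_le q r d e hd h2 2
      norm_num at this
      simp only [this, h2, if_true]
    · simp only [choose_gt25 q r d e he (by omega), h2, if_false]
  rw [Finset.sum_congr rfl h]
  generalize (if 25 ∣ q.choose r then 0 else 1) = X
  generalize (if 5 ∣ q ∨ 5 ∣ (q - 1).choose r then 0 else 1) = Y
  interval_cases d <;> simp [Finset.sum_range_succ] <;> ring

lemma row25' (q d : ℕ) (hd : d < 5) : (rowCount 25 (5 * q + d) : ℚ) =
    (d + 1) * rowCount 25 q +
      (4 - d) * ((q % 5 : ℕ) / ((q % 5 : ℕ) + 1) * rowCount 5 q) := by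
  rw [row25 q d hd]
  push_cast [Nat.cast_sub (show d ≤ 4 by omega)]
  congr 2
  have hq := Nat.div_add_mod q 5
  have hlt := Nat.mod_lt q (show 5 > 0 by norm_num)
  generalize q / 5 = p at hq
  generalize hc : q % 5 = c at hq hlt ⊢
  subst hq
  by_cases h : 5 ∣ 5 * p + c
  · have : c = 0 := by omega
    simp [this]
  · rw [if_neg h, row5 p c hlt, show 5 * p + c - 1 = 5 * p + (c - 1) by omega,
      row5 p (c - 1) (by omega), Nat.sub_add_cancel (by omega)]
    push_cast
    field_simp

lemma wordOf_succ (q d : ℕ) (hd : d < 5) (h : 0 < 5 * q + d) :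
    wordOf 5 (5 * q + d) = wordOf 5 q ++ [d] := by
  unfold wordOf
  rw [Nat.digits_def' (by norm_num) h, List.reverse_cons]
  congr 3 <;> omega

lemma sub1 (q d x : ℕ) (hd : d < 5) (h : 0 < 5 * q + d) :
    subwordCount 5 (5 * q + d) [x] = subwordCount 5 q [x] + if d = x then 1 else 0 := by
  unfold subwordCount
  rw [wordOf_succ q d hd h]
  generalize wordOf 5 q = l
  simp only [Finset.card_filter, List.length_append, List.length_cons, List.length_nil]
  rw [show l.length + (0 + 1) + 1 - (0 + 1) = l.length + 1 by omega, Finset.sum_range_succ,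
    show l.length + 1 - (0 + 1) = l.length by omega]
  congr 1
  · refine Finset.sum_congr rfl fun s hs => ?_
    simp only [Finset.mem_range] at hs
    rw [List.drop_append_of_le_length hs.le, List.take_append_of_le_length]
    simp; omega
  · simp

lemma sub2 (q d x y : ℕ) (hd : d < 5) (h : 0 < 5 * q + d) (hx : 0 < x) :
    subwordCount 5 (5 * q + d) [x, y] =
      subwordCount 5 q [x, y] + if q % 5 = x ∧ d = y then 1 else 0 := by
  unfold subwordCount
  rw [wordOf_succ q d hd h]
  rcases Nat.eq_zero_or_pos q with rfl | hq
  · simp [wordOf]; omega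
  · have hw := wordOf_succ (q / 5) (q % 5) (by omega) (by omega)
    rw [Nat.div_add_mod] at hw
    rw [hw]
    generalize wordOf 5 (q / 5) = l
    generalize q % 5 = c
    simp only [Finset.card_filter, List.length_append, List.length_cons, List.length_nil]
    rw [show l.length + (0 + 1) + (0 + 1) + 1 - (0 + 1 + 1) = l.length + 1 by omega,
      Finset.sum_range_succ,
      show l.length + (0 + 1) + 1 - (0 + 1 + 1) = l.length by omega]
    congr 1
    · refine Finset.sum_congr rfl fun s hs => ?_
      simp only [Finset.mem_range] at hs
      rw [List.drop_append_of_le_length (by simp; omega), List.take_append_of_le_length]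
      simp; omega
    · simp

lemma P_eq (n : ℕ) : (rowCount 5 n : ℚ) =
      2 ^ subwordCount 5 n [1] * 3 ^ subwordCount 5 n [2] * 4 ^ subwordCount 5 n [3] *
        5 ^ subwordCount 5 n [4] := by
  induction n using Nat.strong_induction_on with
  | _ n ih =>
    rcases Nat.eq_zero_or_pos n with rfl | hn
    · simp [rowCount, subwordCount, wordOf]; decide
    · have hlt := Nat.mod_lt n (show 5 > 0 by norm_num)
      have hq := Nat.div_add_mod n 5
      have ih' := ih (n / 5) (by omega)
      generalize n / 5 = q at hq ih'
      generalize n % 5 = d at hq hlt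
      subst hq
      simp only [sub1 q d _ hlt hn]
      rw [row5 q d hlt]
      push_cast
      rw [ih']
      interval_cases d <;> norm_num [pow_succ] <;> ring

/-- For every `n ≥ 0`, as an identity in the rational numbers, the formula for `a_{25}(n)` in
terms of base-5 subword counts. -/
theorem stmt15 (n : ℕ) :
    (rowCount 25 n : ℚ) =
      2 ^ subwordCount 5 n [1] * 3 ^ subwordCount 5 n [2] * 4 ^ subwordCount 5 n [3] *
        5 ^ subwordCount 5 n [4] *
        (1 + 2 * (subwordCount 5 n [1, 0] : ℚ) + (3 / 4) * (subwordCount 5 n [1, 1] : ℚ) +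
          (1 / 3) * (subwordCount 5 n [1, 2] : ℚ) + (1 / 8) * (subwordCount 5 n [1, 3] : ℚ) +
          (8 / 3) * (subwordCount 5 n [2, 0] : ℚ) + (subwordCount 5 n [2, 1] : ℚ) +
          (4 / 9) * (subwordCount 5 n [2, 2] : ℚ) + (1 / 6) * (subwordCount 5 n [2, 3] : ℚ) +
          3 * (subwordCount 5 n [3, 0] : ℚ) + (9 / 8) * (subwordCount 5 n [3, 1] : ℚ) +
          (1 / 2) * (subwordCount 5 n [3, 2] : ℚ) + (3 / 16) * (subwordCount 5 n [3, 3] : ℚ) +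
          (16 / 5) * (subwordCount 5 n [4, 0] : ℚ) + (6 / 5) * (subwordCount 5 n [4, 1] : ℚ) +
          (8 / 15) * (subwordCount 5 n [4, 2] : ℚ) + (1 / 5) * (subwordCount 5 n [4, 3] : ℚ)) := by
  rw [← P_eq]
  induction n using Nat.strong_induction_on with
  | _ n ih =>
    rcases Nat.eq_zero_or_pos n with rfl | hn
    · simp [rowCount, subwordCount, wordOf]; decide
    · have hlt := Nat.mod_lt n (show 5 > 0 by norm_num)
      have hq := Nat.div_add_mod n 5
      have ih' := ih (n / 5) (by omega)
      generalize n / 5 = q at hq ih'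
      generalize n % 5 = d at hq hlt
      subst hq
      rw [row25' q d hlt, ih', row5 q d hlt]
      simp only [sub2 q d _ _ hlt hn (show 0 < 1 by norm_num),
        sub2 q d _ _ hlt hn (show 0 < 2 by norm_num),
        sub2 q d _ _ hlt hn (show 0 < 3 by norm_num),
        sub2 q d _ _ hlt hn (show 0 < 4 by norm_num)]
      have hlt2 := Nat.mod_lt q (show 5 > 0 by norm_num)
      generalize q % 5 = c at hlt2 ⊢
      clear ih ih'
      interval_cases d <;> interval_cases c <;> norm_num <;> ring
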